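/- arXiv:0710.0705 — 4 statements merged into one kernel-verified Lean document; each statement's English description precedes it below -/
import Mathlib

section
/- Let N be a positive integer and let Γ(N) = {g ∈ SL(2,ℤ) : g ≡ 1 (mod N)} be the principal congruence subgroup of level N, acting on ℤ² by matrix–vector multiplication. Two nonzero lattice points (m,l), (m',l') ∈ ℤ² lie in the same Γ(N)-orbit if and only if t := gcd(m,l) equals gcd(m',l') and m/t ≡ m'/t (mod N) and l/t ≡ l'/t (mod N). -/
open Matrix

/-- Two nonzero lattice points `(m,l)` and `(m',l')` lie in the same orbit
under the principal congruence subgroup `Γ(N)` (acting by matrix–vector multiplication)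
if and only if `t := gcd(m,l)` equals `gcd(m',l')` and `m/t ≡ m'/t (mod N)` and
`l/t ≡ l'/t (mod N)`. -/
theorem gamma_orbit_iff (N : ℕ) (hN : 0 < N) (m l m' l' : ℤ)
    (h : (m, l) ≠ (0, 0)) (h' : (m', l') ≠ (0, 0)) :
    (∃ g ∈ CongruenceSubgroup.Gamma N,
        (g : Matrix (Fin 2) (Fin 2) ℤ) *ᵥ ![m, l] = ![m', l']) ↔
      Int.gcd m l = Int.gcd m' l' ∧
        Int.ModEq (N : ℤ) (m / (Int.gcd m l : ℤ)) (m' / (Int.gcd m l : ℤ)) ∧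
        Int.ModEq (N : ℤ) (l / (Int.gcd m l : ℤ)) (l' / (Int.gcd m l : ℤ)) := by
  have ht0 : (Int.gcd m l : ℤ) ≠ 0 := by
    intro h0
    have h1 : Int.gcd m l = 0 := by exact_mod_cast h0
    rw [Int.gcd_eq_zero_iff] at h1
    exact h (by rw [h1.1, h1.2])
  have cast1 : ∀ x : ℤ, ((x : ZMod N) = 1 ↔ (N : ℤ) ∣ x - 1) := by
    intro x
    rw [← ZMod.intCast_zmod_eq_zero_iff_dvd]
    push_cast
    rw [sub_eq_zero]
  have cast0 : ∀ x : ℤ, ((x : ZMod N) = 0 ↔ (N : ℤ) ∣ x) := fun x =>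
    ZMod.intCast_zmod_eq_zero_iff_dvd x N
  obtain ⟨a, ha⟩ := Int.gcd_dvd_left m l
  obtain ⟨b, hb⟩ := Int.gcd_dvd_right m l
  have bez := Int.gcd_eq_gcd_ab m l
  constructor
  · rintro ⟨g, hg, hgm⟩
    rw [CongruenceSubgroup.Gamma_mem, cast1, cast0, cast0, cast1] at hg
    obtain ⟨⟨p, hp⟩, ⟨q, hq⟩, ⟨r, hr⟩, ⟨s, hs⟩⟩ := hg
    have hdet := g.det_coe
    rw [Matrix.det_fin_two] at hdet
    have e1 := congrFun hgm 0
    have e2 := congrFun hgm 1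
    simp [Matrix.mulVec, dotProduct, Fin.sum_univ_two] at e1 e2
    generalize (g : Matrix (Fin 2) (Fin 2) ℤ) 0 0 = A at *
    generalize (g : Matrix (Fin 2) (Fin 2) ℤ) 0 1 = B at *
    generalize (g : Matrix (Fin 2) (Fin 2) ℤ) 1 0 = C at *
    generalize (g : Matrix (Fin 2) (Fin 2) ℤ) 1 1 = D at *
    have f1 : m = D * m' - B * l' := by linear_combination -m * hdet + D * e1 - B * e2
    have f2 : l = A * l' - C * m' := by linear_combination -l * hdet + A * e2 - C * e1
    have hgcd : Int.gcd m l = Int.gcd m' l' := by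
      apply Nat.dvd_antisymm
      · apply Int.dvd_gcd
        · rw [← e1]
          exact dvd_add (Dvd.dvd.mul_left (Int.gcd_dvd_left ..) _) (Dvd.dvd.mul_left (Int.gcd_dvd_right ..) _)
        · rw [← e2]
          exact dvd_add (Dvd.dvd.mul_left (Int.gcd_dvd_left ..) _) (Dvd.dvd.mul_left (Int.gcd_dvd_right ..) _)
      · apply Int.dvd_gcd
        · rw [f1]
          exact dvd_sub (Dvd.dvd.mul_left (Int.gcd_dvd_left ..) _) (Dvd.dvd.mul_left (Int.gcd_dvd_right ..) _)
        · rw [f2]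
          exact dvd_sub (Dvd.dvd.mul_left (Int.gcd_dvd_right ..) _) (Dvd.dvd.mul_left (Int.gcd_dvd_left ..) _)
    refine ⟨hgcd, ?_⟩
    clear hgcd
    generalize (Int.gcd m l : ℤ) = t at *
    have k1 : m' = t * (A * a + B * b) := by rw [← e1, ha, hb]; ring
    have k2 : l' = t * (C * a + D * b) := by rw [← e2, ha, hb]; ring
    rw [k1, k2, ha, hb]
    simp only [Int.mul_ediv_cancel_left _ ht0]
    constructor
    · rw [Int.modEq_iff_dvd]
      exact ⟨p * a + q * b, by linear_combination a * hp + b * hq⟩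
    · rw [Int.modEq_iff_dvd]
      exact ⟨r * a + s * b, by linear_combination a * hr + b * hs⟩
  · rintro ⟨hgcd, h1, h2⟩
    have bez' := Int.gcd_eq_gcd_ab m' l'
    obtain ⟨a', ha'⟩ := Int.gcd_dvd_left m' l'
    obtain ⟨b', hb'⟩ := Int.gcd_dvd_right m' l'
    rw [← hgcd] at bez' ha' hb'
    clear hgcd
    generalize Int.gcdA m l = u at *
    generalize Int.gcdB m l = v at *
    generalize Int.gcdA m' l' = x at *
    generalize Int.gcdB m' l' = y at *
    generalize (Int.gcd m l : ℤ) = t at *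
    subst ha hb ha' hb'
    simp only [Int.mul_ediv_cancel_left _ ht0] at h1 h2
    have c1 : a * u + b * v = 1 := mul_left_cancel₀ ht0 (by linear_combination -bez)
    have c2 : a' * x + b' * y = 1 := mul_left_cancel₀ ht0 (by linear_combination -bez')
    rw [Int.modEq_iff_dvd] at h1 h2
    obtain ⟨p, hp⟩ := h1
    obtain ⟨q, hq⟩ := h2
    obtain rfl : a' = a + N * p := by linear_combination hp
    obtain rfl : b' = b + N * q := by linear_combination hq
    clear hp hq bez bez' h h'
    generalize (N : ℤ) = n at *
    obtain ⟨k, hk⟩ : ∃ k, k = p * u + q * v := ⟨_, rfl⟩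
    obtain ⟨u', hu'⟩ : ∃ u', u' = u - n * k * x := ⟨_, rfl⟩
    obtain ⟨v', hv'⟩ : ∃ v', v' = v - n * k * y := ⟨_, rfl⟩
    have c3 : (a + n * p) * u' + (b + n * q) * v' = 1 := by
      rw [hu', hv']
      linear_combination c1 - n * k * c2 - n * hk
    refine ⟨⟨!![(a + n * p) * u + v' * b, (a + n * p) * v - v' * a;
      (b + n * q) * u - u' * b, (b + n * q) * v + u' * a], ?_⟩, ?_, ?_⟩
    · rw [Matrix.det_fin_two_of]
      linear_combination (a * u + b * v) * c3 + c1
    · refine CongruenceSubgroup.Gamma_mem.mpr ?_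
      rw [cast1, cast0, cast0, cast1]
      refine ⟨⟨p * u - k * y * b, ?_⟩, ⟨p * v + k * y * a, ?_⟩,
        ⟨q * u + k * x * b, ?_⟩, ⟨q * v - k * x * a, ?_⟩⟩
      · show (a + n * p) * u + v' * b - 1 = _
        linear_combination b * hv' + c1
      · show (a + n * p) * v - v' * a = _
        linear_combination -a * hv'
      · show (b + n * q) * u - u' * b = _
        linear_combination -b * hu'
      · show (b + n * q) * v + u' * a - 1 = _
        linear_combination a * hu' + c1
    · ext i
      fin_cases i
      · simp [Matrix.mulVec, dotProduct, Fin.sum_univ_two]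
        linear_combination t * (a + n * p) * c1
      · simp [Matrix.mulVec, dotProduct, Fin.sum_univ_two]
        linear_combination t * (b + n * q) * c1
end

section
/- Fix a positive integer N and let ∼ denote the smallest congruence relation on ℤ² satisfying: (i) (m,l) ∼ 𝔱^N·(m,l) for all (m,l), where 𝔱 = (1 1; 0 1); and (ii) (m,l) ∼ (m,kl) for every k ∈ ℤ with k ≡ 1 (mod N) and gcd(m,kl) = gcd(m,l). (Here a congruence relation is an equivalence relation E on ℤ² such that E((m,l),(n,k)) implies E(g·(m,l), g·(n,k)) for all g ∈ SL(2,ℤ), and ∼ is the intersection of all congruence relations with properties (i) and (ii).) Then for every integer n ∈ ℤ, (m,l) ∼ (m',l') implies (nm,nl) ∼ (nm',nl'). -/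
/-- The action of `SL(2,ℤ)` on the lattice `ℤ²` by matrix–vector multiplication. -/
def matAct (g : Matrix.SpecialLinearGroup (Fin 2) ℤ) (v : ℤ × ℤ) : ℤ × ℤ :=
  (g 0 0 * v.1 + g 0 1 * v.2, g 1 0 * v.1 + g 1 1 * v.2)

/-- A congruence relation on the lattice `ℤ²`: an equivalence relation `E` such that
`g·(m,l)` and `g·(n,k)` are equivalent whenever `(m,l)` and `(n,k)` are, for all
`g ∈ SL(2,ℤ)`. -/
def IsCongruenceRel (E : ℤ × ℤ → ℤ × ℤ → Prop) : Prop :=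
  Equivalence E ∧
    ∀ (g : Matrix.SpecialLinearGroup (Fin 2) ℤ) (v w : ℤ × ℤ), E v w → E (matAct g v) (matAct g w)

/-- The two defining properties of the relation `∼`:
(i) `(m,l) ∼ 𝔱^N·(m,l)`;
(ii) `(m,l) ∼ (m,kl)` whenever `k ≡ 1 (mod N)` and `gcd(m,kl) = gcd(m,l)`. -/
def SatisfiesDefProps (N : ℕ) (E : ℤ × ℤ → ℤ × ℤ → Prop) : Prop :=
  (∀ v : ℤ × ℤ, E v (matAct (ModularGroup.T ^ N) v)) ∧
    (∀ m l k : ℤ, Int.ModEq (N : ℤ) k 1 → Int.gcd m (k * l) = Int.gcd m l →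
      E (m, l) (m, k * l))

/-- The smallest congruence relation `∼` with the two defining properties, i.e. the
intersection of all congruence relations having them. -/
def simRel (N : ℕ) (v w : ℤ × ℤ) : Prop :=
  ∀ E : ℤ × ℤ → ℤ × ℤ → Prop, IsCongruenceRel E → SatisfiesDefProps N E → E v w

/-- For every integer `n`, if `(m,l) ∼ (m',l')` then `(nm,nl) ∼ (nm',nl')`. -/
theorem simRel_smul (N : ℕ) (hN : 0 < N) (n m l m' l' : ℤ)
    (h : simRel N (m, l) (m', l')) :
    simRel N (n * m, n * l) (n * m', n * l') := by
  intro E hE hP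
  have key : ∀ (g : Matrix.SpecialLinearGroup (Fin 2) ℤ) (v : ℤ × ℤ),
      (n * (matAct g v).1, n * (matAct g v).2) = matAct g (n * v.1, n * v.2) := by
    intro g v
    simp only [matAct, Prod.mk.injEq]
    constructor <;> ring
  refine h (fun v w => E (n * v.1, n * v.2) (n * w.1, n * w.2)) ⟨⟨fun v => hE.1.refl _,
    fun h => hE.1.symm h, fun h h' => hE.1.trans h h'⟩, ?_⟩ ⟨?_, ?_⟩
  · intro g v w hvw
    simp only [key]
    exact hE.2 g _ _ hvw
  · intro v
    simp only [key]
    exact hP.1 _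
  · intro a b k hk hg
    have h1 := hP.2 (n * a) (n * b) k hk (by
      rw [mul_left_comm, Int.gcd_mul_left, Int.gcd_mul_left, hg])
    rw [mul_left_comm] at h1
    exact h1
end

section
/- Fix a positive integer N and let ∼ denote the smallest congruence relation on ℤ² satisfying: (i) (m,l) ∼ 𝔱^N·(m,l) for all (m,l), where 𝔱 = (1 1; 0 1); and (ii) (m,l) ∼ (m,kl) for every k ∈ ℤ with k ≡ 1 (mod N) and gcd(m,kl) = gcd(m,l). Then two lattice points (m,l) and (m',l') are in the same Γ(N)-orbit if and only if (m,l) ∼ (m',l'). -/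
theorem matAct_mul (g h : Matrix.SpecialLinearGroup (Fin 2) ℤ) (v : ℤ × ℤ) :
    matAct (g * h) v = matAct g (matAct h v) := by
  simp only [matAct, Matrix.SpecialLinearGroup.coe_mul, Matrix.mul_apply, Fin.sum_univ_two]
  ext <;> simp <;> ring

theorem matAct_one (v : ℤ × ℤ) : matAct 1 v = v := by
  simp [matAct]

theorem matAct_T_pow (n : ℤ) (v : ℤ × ℤ) :
    matAct (ModularGroup.T ^ n) v = (v.1 + n * v.2, v.2) := by
  simp [matAct, ModularGroup.coe_T_zpow]

theorem mem_Gamma_iff_dvd (N : ℕ) (g : Matrix.SpecialLinearGroup (Fin 2) ℤ) :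
    g ∈ CongruenceSubgroup.Gamma N ↔
      (N : ℤ) ∣ g 0 0 - 1 ∧ (N : ℤ) ∣ g 0 1 ∧ (N : ℤ) ∣ g 1 0 ∧ (N : ℤ) ∣ g 1 1 - 1 := by
  rw [CongruenceSubgroup.Gamma_mem]
  simp only [← ZMod.intCast_zmod_eq_zero_iff_dvd, Int.cast_sub, Int.cast_one, sub_eq_zero]

/-- The orbit relation of `Γ(N)`. -/
def orbRel (N : ℕ) (v w : ℤ × ℤ) : Prop :=
  ∃ g ∈ CongruenceSubgroup.Gamma N, matAct g v = w

theorem orbRel_isCongruenceRel (N : ℕ) : IsCongruenceRel (orbRel N) := by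
  refine ⟨⟨fun v => ⟨1, one_mem _, matAct_one v⟩, ?_, ?_⟩, ?_⟩
  · rintro v w ⟨g, hg, rfl⟩
    exact ⟨g⁻¹, inv_mem hg, by rw [← matAct_mul, inv_mul_cancel, matAct_one]⟩
  · rintro u v w ⟨g, hg, rfl⟩ ⟨h, hh, rfl⟩
    exact ⟨h * g, mul_mem hh hg, matAct_mul _ _ _⟩
  · rintro g v w ⟨h, hh, rfl⟩
    have hn : (CongruenceSubgroup.Gamma N).Normal := CongruenceSubgroup.Gamma_normal N
    refine ⟨g * h * g⁻¹, hn.conj_mem h hh g, ?_⟩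
    rw [← matAct_mul, ← matAct_mul, inv_mul_cancel_right]

theorem orbRel_satisfies (N : ℕ) : SatisfiesDefProps N (orbRel N) := by
  refine ⟨fun v => ⟨ModularGroup.T ^ N, ?_, rfl⟩, ?_⟩
  · rw [mem_Gamma_iff_dvd, ← zpow_natCast, ModularGroup.coe_T_zpow]
    simp
  · intro m l k hk hgcd
    rcases Nat.eq_zero_or_pos (Int.gcd m l) with h0 | hpos
    · obtain ⟨rfl, rfl⟩ := Int.gcd_eq_zero_iff.1 h0
      exact ⟨1, one_mem _, by simp [matAct_one]⟩
    · set d := Int.gcd m l with hd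
      obtain ⟨a, b, -, hm, hl⟩ := Int.exists_gcd_one hpos
      rw [← hd] at hm hl
      have hd0 : (d : ℤ) ≠ 0 := by exact_mod_cast hpos.ne'
      have hbez := Int.gcd_eq_gcd_ab m (k * l)
      rw [hgcd] at hbez
      set x := Int.gcdA m (k * l)
      set y := Int.gcdB m (k * l)
      have h1 : a * x + k * b * y = 1 := by
        apply mul_left_cancel₀ hd0
        linear_combination (-1 : ℤ) * hbez - x * hm - k * y * hl
      have hk' : (N : ℤ) ∣ k - 1 := hk.symm.dvd
      have hdet : (!![y * b + a * x, -(a * y) + a * k * y; -(x * b) + k * b * x,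
          x * a + k ^ 2 * b * y] : Matrix (Fin 2) (Fin 2) ℤ).det = 1 := by
        rw [Matrix.det_fin_two_of]
        linear_combination (a * x + k * b * y + 1) * h1
      refine ⟨⟨!![y * b + a * x, -(a * y) + a * k * y; -(x * b) + k * b * x,
        x * a + k ^ 2 * b * y], hdet⟩, ?_, ?_⟩
      · refine (mem_Gamma_iff_dvd _ _).2 ?_
        obtain ⟨t, ht⟩ := hk'
        simp only [Matrix.SpecialLinearGroup.coe_mk, Matrix.of_apply, Matrix.cons_val', Matrix.cons_val_zero,
          Matrix.cons_val_one, Matrix.cons_val_fin_one]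
        refine ⟨⟨-(y * b * t), ?_⟩, ⟨a * y * t, ?_⟩, ⟨b * x * t, ?_⟩, ⟨y * b * k * t, ?_⟩⟩
        · linear_combination h1 - y * b * ht
        · linear_combination a * y * ht
        · linear_combination b * x * ht
        · linear_combination h1 + y * b * k * ht
      · simp only [matAct, Matrix.SpecialLinearGroup.coe_mk, Matrix.of_apply, Matrix.cons_val', Matrix.cons_val_zero,
          Matrix.cons_val_one, Matrix.cons_val_fin_one]
        rw [hm, hl]
        ext
        · simp only
          linear_combination a * d * h1
        · simp only
          linear_combination k * b * d * h1

theorem E_T (N : ℕ) (E : ℤ × ℤ → ℤ × ℤ → Prop) (hE : IsCongruenceRel E)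
    (hS : SatisfiesDefProps N E) (x y : ℤ) (j : ℤ) : E (x, y) (x + N * j * y, y) := by
  have hstep : ∀ x : ℤ, E (x, y) (x + N * y, y) := by
    intro x
    have := hS.1 (x, y)
    rwa [← zpow_natCast, matAct_T_pow] at this
  induction j using Int.induction_on with
  | zero => simpa using hE.1.refl (x, y)
  | succ i ih =>
    refine hE.1.trans ih ?_
    convert hstep _ using 2
    ring
  | pred i ih =>
    refine hE.1.trans ih (hE.1.symm ?_)
    convert hstep _ using 2
    ring

/-- Two lattice points `(m,l)` and `(m',l')` are in the same `Γ(N)`-orbit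
if and only if `(m,l) ∼ (m',l')`. -/
theorem gamma_orbit_iff_simRel (N : ℕ) (hN : 0 < N) (m l m' l' : ℤ) :
    (∃ g ∈ CongruenceSubgroup.Gamma N, matAct g (m, l) = (m', l')) ↔
      simRel N (m, l) (m', l') := by
  constructor
  · rintro ⟨g, hg, hgv⟩ E hE hS
    rw [← hgv]
    rcases Nat.eq_zero_or_pos (Int.gcd m l) with h0 | hpos
    · obtain ⟨rfl, rfl⟩ := Int.gcd_eq_zero_iff.1 h0
      have : matAct g (0, 0) = (0, 0) := by simp [matAct]
      rw [this]
      exact hE.1.refl _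
    · obtain ⟨a, b, hab, hm, hl⟩ := Int.exists_gcd_one hpos
      set d := Int.gcd m l with hd
      have hbez := Int.gcd_eq_gcd_ab a b
      rw [hab] at hbez
      set x := Int.gcdA a b
      set y := Int.gcdB a b
      let h : Matrix.SpecialLinearGroup (Fin 2) ℤ := ⟨!![y, a; -x, b], by
        rw [Matrix.det_fin_two_of]; push_cast at hbez; linear_combination -hbez⟩
      have hv : (m, l) = matAct h (0, (d : ℤ)) := by
        simp [matAct, h, ← hm, ← hl]
      have hn : (CongruenceSubgroup.Gamma N).Normal := CongruenceSubgroup.Gamma_normal N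
      have hk := hn.conj_mem g hg h⁻¹
      rw [inv_inv] at hk
      set k := h⁻¹ * g * h with hkdef
      have hw : matAct g (m, l) = matAct h (matAct k (0, (d : ℤ))) := by
        rw [hv, ← matAct_mul, ← matAct_mul, hkdef]
        congr 1
        group
      rw [hw, hv]
      apply hE.2
      rw [mem_Gamma_iff_dvd] at hk
      obtain ⟨-, ⟨j, hj⟩, -, hb⟩ := hk
      have hdet := k.det_coe
      rw [Matrix.det_fin_two] at hdet
      have hcop : IsCoprime (k 0 1) (k 1 1) := ⟨-k 1 0, k 0 0, by linear_combination hdet⟩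
      have h1 : E (0, (d : ℤ)) (k 0 1 * d, d) := by
        have := E_T N E hE hS 0 d j
        rwa [zero_add, ← hj] at this
      have h2 : E (k 0 1 * d, (d : ℤ)) (k 0 1 * d, k 1 1 * d) := by
        apply hS.2
        · exact ((Int.modEq_iff_dvd).2 hb).symm
        · rw [Int.gcd_mul_right, Int.isCoprime_iff_gcd_eq_one.1 hcop]
          simp
      have h3 : matAct k (0, (d : ℤ)) = (k 0 1 * d, k 1 1 * d) := by
        simp [matAct]
      rw [h3]
      exact hE.1.trans h1 h2
  · intro h
    exact h (orbRel N) (orbRel_isCongruenceRel N) (orbRel_satisfies N)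
end

section
/- Let N be a positive integer, let ℚ(ζ_N) ⊆ ℂ be the N-th cyclotomic field, and let a be a nonzero element of ℚ(ζ_N). For q ∈ ℤ define j(q) := σ_q(a)/a if gcd(q,N) = 1, where σ_q ∈ Gal(ℚ(ζ_N)/ℚ) is the automorphism sending every N-th root of unity ζ to ζ^q, and j(q) := 0 if gcd(q,N) ≠ 1. Then the following are equivalent: (1) j(qq') = j(q)·j(q') for all q, q' ∈ ℤ; (2) j(q) ∈ ℚ for all q ∈ ℤ. Moreover, if these conditions hold, then j(q) ∈ {0, 1, −1} for all q ∈ ℤ. -/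
/-- Let `K = ℚ(ζ_N)` be the `N`-th cyclotomic field (a field generated over `ℚ`
by a primitive `N`-th root of unity `ζ`), let `a ∈ K` be nonzero, and let `σ_q` be the Galois
automorphism sending every `N`-th root of unity to its `q`-th power (for `gcd(q,N) = 1`).
Define `j(q) := σ_q(a)/a` if `gcd(q,N) = 1` and `j(q) := 0` otherwise. Then `j` is
multiplicative (a Dirichlet character) if and only if all values `j(q)` are rational;
moreover, in that case `j(q) ∈ {0, 1, −1}` for all `q`. -/
theorem hopf_symbol_dirichlet_iff_rational (N : ℕ) (hN : 0 < N)
    (K : Type) [Field K] [Algebra ℚ K]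
    (ζ : K) (hζ : IsPrimitiveRoot ζ N) (hgen : Algebra.adjoin ℚ {ζ} = ⊤)
    (σ : ℤ → (K ≃ₐ[ℚ] K))
    (hσ : ∀ q : ℤ, Int.gcd q N = 1 → ∀ x : K, x ^ N = 1 → σ q x = x ^ q)
    (a : K) (ha : a ≠ 0)
    (j : ℤ → K)
    (hj : ∀ q : ℤ, j q = if Int.gcd q N = 1 then σ q a / a else 0) :
    ((∀ q q' : ℤ, j (q * q') = j q * j q') ↔
        ∀ q : ℤ, ∃ r : ℚ, j q = algebraMap ℚ K r) ∧
      ((∀ q q' : ℤ, j (q * q') = j q * j q') →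
        ∀ q : ℤ, j q = 0 ∨ j q = 1 ∨ j q = -1) := by
  have : NeZero N := ⟨hN.ne'⟩
  have hcyc : IsCyclotomicExtension {N} ℚ K := by
    rw [IsCyclotomicExtension.iff_singleton]
    refine ⟨⟨ζ, hζ⟩, fun x => ?_⟩
    have hx : x ∈ Algebra.adjoin ℚ {ζ} := by rw [hgen]; trivial
    refine Algebra.adjoin_mono ?_ hx
    simpa using hζ.pow_eq_one
  have hfd : FiniteDimensional ℚ K := IsCyclotomicExtension.finiteDimensional {N} ℚ K
  have hgal : IsGalois ℚ K := IsCyclotomicExtension.isGalois {N} ℚ K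
  have hext : ∀ f g : K ≃ₐ[ℚ] K, f ζ = g ζ → f = g := by
    intro f g h
    have : (f : K →ₐ[ℚ] K) = g := by
      apply AlgHom.ext_of_adjoin_eq_top hgen
      intro x hx
      rw [Set.mem_singleton_iff.1 hx]
      exact h
    ext x
    exact DFunLike.congr_fun this x
  have hcop : ∀ q q' : ℤ, Int.gcd (q * q') N = 1 ↔ Int.gcd q N = 1 ∧ Int.gcd q' N = 1 := by
    intro q q'
    simp only [← Int.isCoprime_iff_gcd_eq_one]
    exact IsCoprime.mul_left_iff
  have hmul : ∀ q q' : ℤ, Int.gcd q N = 1 → Int.gcd q' N = 1 → σ (q * q') = σ q * σ q' := by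
    intro q q' h h'
    apply hext
    rw [hσ _ ((hcop q q').2 ⟨h, h'⟩) ζ hζ.pow_eq_one, AlgEquiv.mul_apply,
      hσ q' h' ζ hζ.pow_eq_one, map_zpow₀, hσ q h ζ hζ.pow_eq_one, zpow_mul]
  have hsurj : ∀ τ : K ≃ₐ[ℚ] K, ∃ q : ℤ, Int.gcd q N = 1 ∧ σ q = τ := by
    intro τ
    have hτ : IsPrimitiveRoot (τ ζ) N := hζ.map_of_injective τ.injective
    obtain ⟨i, -, hi, h⟩ := (hζ.isPrimitiveRoot_iff).1 hτ
    have hi' : Int.gcd (i : ℤ) N = 1 := by simpa [Int.gcd_natCast_natCast] using hi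
    refine ⟨i, hi', hext _ _ ?_⟩
    rw [hσ _ hi' ζ hζ.pow_eq_one, zpow_natCast, h]
  have hj1 : ∀ q : ℤ, Int.gcd q N = 1 → j q = σ q a / a := by
    intro q h
    rw [hj, if_pos h]
  have hj0 : ∀ q : ℤ, Int.gcd q N ≠ 1 → j q = 0 := by
    intro q h
    rw [hj, if_neg h]
  have hne : ∀ q : ℤ, Int.gcd q N = 1 → j q ≠ 0 := by
    intro q h
    rw [hj1 q h]
    exact div_ne_zero (by simpa using ha) ha
  have hcoc : ∀ q q' : ℤ, Int.gcd q N = 1 → Int.gcd q' N = 1 →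
      j (q * q') = j q * σ q (j q') := by
    intro q q' h h'
    have h1 : σ q a ≠ 0 := by simpa using ha
    rw [hj1 _ ((hcop q q').2 ⟨h, h'⟩), hj1 q h, hj1 q' h', hmul q q' h h', map_div₀,
      AlgEquiv.mul_apply]
    field_simp
  have hrat : (∀ q q' : ℤ, j (q * q') = j q * j q') →
      ∀ q : ℤ, ∃ r : ℚ, j q = algebraMap ℚ K r := by
    intro H q
    by_cases h : Int.gcd q N = 1
    · have : j q ∈ Set.range (algebraMap ℚ K) := by
        rw [IsGalois.mem_range_algebraMap_iff_fixed]
        intro τ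
        obtain ⟨p, hp, rfl⟩ := hsurj τ
        have := hcoc p q hp h
        rw [H] at this
        exact (mul_left_cancel₀ (hne p hp) this).symm
      obtain ⟨r, hr⟩ := this
      exact ⟨r, hr.symm⟩
    · exact ⟨0, by rw [hj0 q h, map_zero]⟩
  refine ⟨⟨hrat, ?_⟩, ?_⟩
  · intro H q q'
    by_cases h : Int.gcd q N = 1
    · by_cases h' : Int.gcd q' N = 1
      · rw [hcoc q q' h h']
        obtain ⟨r, hr⟩ := H q'
        rw [hr, AlgEquiv.commutes]
      · rw [hj0 q' h', hj0 _ (fun hh => h' ((hcop q q').1 hh).2), mul_zero]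
    · rw [hj0 q h, hj0 _ (fun hh => h ((hcop q q').1 hh).1), zero_mul]
  · intro H q
    by_cases h : Int.gcd q N = 1
    · right
      obtain ⟨r, hr⟩ := hrat H q
      have hone : Int.gcd (1 : ℤ) N = 1 := by simp
      have hs1 : σ 1 = 1 := by
        apply hext
        rw [hσ 1 hone ζ hζ.pow_eq_one, zpow_one, AlgEquiv.one_apply]
      have hpow : ∀ n : ℕ, Int.gcd (q ^ n) N = 1 ∧ σ (q ^ n) = σ q ^ n ∧ j (q ^ n) = j q ^ n := by
        intro n
        induction n with
        | zero =>
          refine ⟨by simp, by simpa using hs1, ?_⟩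
          rw [pow_zero, pow_zero, hj1 1 hone, hs1, AlgEquiv.one_apply, div_self ha]
        | succ k ih =>
          obtain ⟨i1, i2, i3⟩ := ih
          rw [pow_succ, pow_succ, pow_succ]
          exact ⟨(hcop _ _).2 ⟨i1, h⟩, by rw [hmul _ _ i1 h, i2], by rw [H, i3]⟩
      have hn : Nat.card (K ≃ₐ[ℚ] K) ≠ 0 := Nat.card_pos.ne'
      obtain ⟨i1, i2, i3⟩ := hpow (Nat.card (K ≃ₐ[ℚ] K))
      rw [hj1 _ i1, i2, pow_card_eq_one', AlgEquiv.one_apply, div_self ha, hr, ← map_pow] at i3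
      have hr1 : r ^ Nat.card (K ≃ₐ[ℚ] K) = 1 := by
        apply (algebraMap ℚ K).injective
        rw [← i3, map_one]
      rcases (pow_eq_one_iff_cases).1 hr1 with h0 | h1 | h1
      · exact absurd h0 hn
      · left; rw [hr, h1, map_one]
      · right; rw [hr, h1.1, map_neg, map_one]
    · exact Or.inl (hj0 q h)
end
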